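/- arXiv:2404.06768 — 3 statements merged into one kernel-verified Lean document; each statement's English description precedes it below -/
import Mathlib

section
/- Let n = 2t be an even integer with n ≥ 6, let s ≥ 1 be an integer with 2s < 3^t + 1, and let W_1, …, W_{2s} be pairwise disjoint t-dimensional F_3-linear subspaces of F_3^n. Then the linear code C_f associated to the ternary partial-spread function f is a minimal linear code of length 3^n − 1: for every codeword c ∈ C_f with c ≠ 0 and every codeword c' ∈ C_f whose support is contained in the support of c, there exists λ ∈ F_3 with c' = λ·c. -/
open Matrix Finset

/-!
Write a codeword as `α f + φ` with `φ` a linear form. After scaling, the case `α ≠ 0` asks that a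
linear form `v` vanishing wherever `f` agrees with a linear form `u` (away from `0`) be zero.

* If `u = 0`, the subspaces `W k` cover the complement of `ker v`. Counting the points of the affine
  hyperplane `v = 1` shows that fewer than `q ^ t` subspaces cannot do so,
  where `q` is the number of scalars.
* If `u ≠ 0`, the invariance of `f` under scaling forces `f` to vanish where `u` and `v` are both
  nonzero, so each `W k` lies in `ker u` or in `ker v`. As two of the `W k` span the space, at most
  one lies in `ker u`, and it then contains `ker u`, which is too large.

In the case `α = 0`, scaling a point of some `W k` inside `ker φ` shows that a codeword `β f + ψ`
supported in that of `φ` has `β = 0`, and then `ker φ ≤ ker ψ` makes `ψ` a multiple of `φ`.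
-/

open Module (Dual finrank)

section LinearForms

variable {F V : Type*} [Field F] [AddCommGroup V] [Module F V]

lemma eq_zero_of_isCompl_of_le_ker {p q : Submodule F V} (hpq : IsCompl p q) {φ : Dual F V}
    (hp : p ≤ φ.ker) (hq : q ≤ φ.ker) : φ = 0 :=
  LinearMap.ker_eq_top.mp (top_le_iff.mp (hpq.sup_eq_top ▸ sup_le hp hq))

lemma exists_eq_smul_of_ker_le_ker {φ ψ : Dual F V} (h : φ.ker ≤ ψ.ker) :
    ∃ c : F, ψ = c • φ := by
  have hmem := mem_span_of_iInf_ker_le_ker (L := fun _ : Unit ↦ φ) (K := ψ) (by simpa using h)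
  obtain ⟨c, hc⟩ := Submodule.mem_span_singleton.mp (by simpa using hmem)
  exact ⟨c, hc.symm⟩

lemma exists_mem_ne_zero_apply_eq_zero (φ : Dual F V) {p : Submodule F V} (hp : 1 < finrank F p) :
    ∃ x ∈ p, x ≠ 0 ∧ φ x = 0 := by
  have : Module.Finite F p := Module.finite_of_finrank_pos (by lia)
  have hker : (φ.domRestrict p).ker ≠ ⊥ :=
    LinearMap.ker_ne_bot_of_finrank_lt (by rwa [Module.finrank_self])
  obtain ⟨x, hx, hx0⟩ := Submodule.exists_mem_ne_zero_of_ne_bot hker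
  exact ⟨x, x.2, by simpa using hx0, hx⟩

lemma natCard_mul_natCard_fiber {φ : Dual F V} (hφ : φ ≠ 0) (a : F) :
    Nat.card F * Nat.card (φ ⁻¹' {a}) = Nat.card V := by
  have hsurj : Function.Surjective φ := φ.surjective hφ
  have hfiber : Nat.card (φ ⁻¹' {a}) = Nat.card φ.ker :=
    Nat.card_congr (AddMonoidHom.fiberEquivKerOfSurjective (f := φ.toAddMonoidHom) hsurj a)
  have hquot : Nat.card (V ⧸ φ.ker) = Nat.card F :=
    Nat.card_congr (φ.quotKerEquivOfSurjective hsurj).toEquiv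
  rw [Submodule.card_eq_card_quotient_mul_card φ.ker, hfiber, hquot, mul_comm]

lemma natCard_mul_natCard_fiber_le (φ : Dual F V) {a : F} (ha : a ≠ 0) :
    Nat.card F * Nat.card (φ ⁻¹' {a}) ≤ Nat.card V := by
  rcases eq_or_ne φ 0 with rfl | hφ
  · have hempty : (0 : Dual F V) ⁻¹' {a} = ∅ := Set.eq_empty_of_forall_notMem fun _ hx ↦ ha hx.symm
    simp [hempty]
  · exact (natCard_mul_natCard_fiber hφ a).le

lemma natCard_le_sum_natCard_of_cover_compl_ker [Finite V] {ι : Type*} [Fintype ι]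
    {W : ι → Submodule F V} {φ : Dual F V} (hφ : φ ≠ 0)
    (hcover : ∀ x, φ x ≠ 0 → ∃ k, x ∈ W k) : Nat.card V ≤ ∑ k, Nat.card (W k) := by
  have hfiber : φ ⁻¹' {1} ⊆ ⋃ k, (↑) '' (φ.domRestrict (W k) ⁻¹' {1}) := by
    intro x hx
    rw [Set.mem_preimage, Set.mem_singleton_iff] at hx
    obtain ⟨k, hk⟩ := hcover x (by simp [hx])
    exact Set.mem_iUnion.mpr ⟨k, ⟨x, hk⟩, hx, rfl⟩
  calc Nat.card V = Nat.card F * (φ ⁻¹' {1}).ncard := (natCard_mul_natCard_fiber hφ 1).symm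
    _ ≤ Nat.card F * ∑ k, ((↑) '' (φ.domRestrict (W k) ⁻¹' {1}) : Set V).ncard := by
      gcongr
      exact (Set.ncard_le_ncard hfiber).trans (Set.ncard_iUnion_le_of_fintype _)
    _ = ∑ k, Nat.card F * (φ.domRestrict (W k) ⁻¹' {1}).ncard := by
      simp only [Finset.mul_sum, Set.ncard_image_of_injective _ Subtype.val_injective]
    _ ≤ ∑ k, Nat.card (W k) :=
      Finset.sum_le_sum fun k _ ↦ natCard_mul_natCard_fiber_le (φ.domRestrict (W k)) one_ne_zero

end LinearForms

section Code

variable {F V : Type*} [Field F] [AddCommGroup V] [Module F V]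

/-- A linear code is minimal if the codewords whose support is contained in that of a nonzero
codeword `c` are the scalar multiples of `c`. -/
def IsMinimalCode {κ : Type*} (C : Submodule F (κ → F)) : Prop :=
  ∀ c ∈ C, c ≠ 0 → ∀ d ∈ C, Function.support d ⊆ Function.support c → ∃ a : F, d = a • c

/-- The encoder of the code `C_f`: it sends `(α, φ)` to the restriction of `α f + φ` to the nonzero
vectors. Linear forms stand for the maps `x ↦ w · x`, so that no basis is needed. -/
def functionEncoder (f : V → F) : F × Dual F V →ₗ[F] {x : V // x ≠ 0} → F :=
  (LinearMap.toSpanSingleton F _ fun x ↦ f x.1).coprod (LinearMap.pi fun x ↦ Dual.eval F V x.1)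

@[simp]
lemma functionEncoder_apply (f : V → F) (α : F) (φ : Dual F V) (x : {x : V // x ≠ 0}) :
    functionEncoder f (α, φ) x = α * f x + φ x := by
  simp [functionEncoder]

/-- The linear code `C_f` attached to a function `f : V → F`. -/
def functionCode (f : V → F) : Submodule F ({x : V // x ≠ 0} → F) :=
  (functionEncoder f).range

lemma coe_functionCode_pi {m : Type*} [Fintype m] (f : (m → F) → F) :
    (functionCode f : Set ({x : m → F // x ≠ 0} → F)) =
      {c | ∃ (α : F) (w : m → F), c = fun x ↦ α * f x.1 + w ⬝ᵥ x.1} := by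
  classical
  ext c
  simp only [functionCode, SetLike.mem_coe, LinearMap.mem_range, Prod.exists, Set.mem_ofPred_eq,
    (dotProductEquiv F m).surjective.exists, funext_iff, functionEncoder_apply,
    dotProductEquiv_apply_apply, eq_comm]

lemma isMinimalCode_functionCode_of_forall {f : V → F}
    (hlin : ∀ (φ ψ : Dual F V) (β : F),
      (∀ x, x ≠ 0 → φ x = 0 → β * f x + ψ x = 0) → β = 0)
    (hagree : ∀ u v : Dual F V, (∀ x, x ≠ 0 → f x = u x → v x = 0) → v = 0) :
    IsMinimalCode (functionCode f) := by
  rintro _ ⟨⟨α, φ⟩, rfl⟩ - _ ⟨⟨β, ψ⟩, rfl⟩ hle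
  have hzero (x : V) (hx0 : x ≠ 0) (hx : α * f x + φ x = 0) : β * f x + ψ x = 0 := by
    by_contra hx'
    exact hle (a := ⟨x, hx0⟩) (by simpa using hx') (by simpa using hx)
  rcases eq_or_ne α 0 with rfl | hα
  · simp only [zero_mul, zero_add] at hzero
    obtain rfl : β = 0 := hlin φ ψ β hzero
    have hker : φ.ker ≤ ψ.ker := fun x hx ↦ by
      rcases eq_or_ne x 0 with rfl | hx0
      · exact zero_mem _
      · simpa using hzero x hx0 hx
    obtain ⟨c, rfl⟩ := exists_eq_smul_of_ker_le_ker hker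
    exact ⟨c, by ext; simp⟩
  · have hψ : ψ - (β / α) • φ = 0 := by
      refine hagree (-(α⁻¹ • φ)) _ fun x hx0 hx ↦ ?_
      have hφx : φ x = -(α * f x) := by simp [hx, hα]
      have hψx : ψ x = -(β * f x) := eq_neg_of_add_eq_zero_right (hzero x hx0 (by simp [hφx]))
      simp only [LinearMap.sub_apply, LinearMap.smul_apply, smul_eq_mul, hφx, hψx]
      field_simp
      ring
    refine ⟨β / α, ?_⟩
    rw [← map_smul, Prod.smul_mk, ← sub_eq_zero.mp hψ, smul_eq_mul, div_mul_cancel₀ _ hα]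

end Code

section PartialSpread

variable {F V ι : Type*} [Field F] [AddCommGroup V] [Module F V]
  {t : ℕ} {W : ι → Submodule F V} {f : V → F}

lemma le_ker_or_le_ker_of_agree_imp_apply_eq_zero
    (hsmul : ∀ (c : Fˣ) (x : V), f (c • x) = f x) {p : Submodule F V}
    (hne : ∀ x ∈ p, x ≠ 0 → f x ≠ 0) {u v : Dual F V}
    (hagree : ∀ x, x ≠ 0 → f x = u x → v x = 0) :
    p ≤ u.ker ∨ p ≤ v.ker := by
  refine AddSubgroupClass.subset_union.mp fun x hx ↦ or_iff_not_imp_left.mpr fun hux ↦ ?_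
  have hx0 : x ≠ 0 := fun h ↦ hux (h ▸ zero_mem _)
  -- the multiple of `x` at which `u` takes the value `f x`
  let c : Fˣ := Units.mk0 (f x / u x) (div_ne_zero (hne x hx hx0) hux)
  have hvcx : v (c • x) = 0 := by
    refine hagree _ ((smul_ne_zero_iff_ne c).mpr hx0) ?_
    rw [hsmul, Units.smul_def, map_smul, smul_eq_mul, Units.val_mk0, div_mul_cancel₀ _ hux]
  simpa [Units.smul_def] using hvcx

lemma eq_zero_of_agree_imp_apply_eq_zero_of_ne_zero [Nontrivial ι] [FiniteDimensional F V]
    (ht : 2 ≤ t) (hdim : ∀ k, finrank F (W k) = t)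
    (hcompl : Pairwise (Function.onFun IsCompl W))
    (hsmul : ∀ (c : Fˣ) (x : V), f (c • x) = f x)
    (hsupp : ∀ x, x ≠ 0 → (f x ≠ 0 ↔ ∃ k, x ∈ W k)) {u v : Dual F V} (hu : u ≠ 0)
    (hagree : ∀ x, x ≠ 0 → f x = u x → v x = 0) : v = 0 := by
  have hor (k : ι) : W k ≤ u.ker ∨ W k ≤ v.ker :=
    le_ker_or_le_ker_of_agree_imp_apply_eq_zero hsmul (fun x hx hx0 ↦ (hsupp x hx0).mpr ⟨k, hx⟩)
      hagree
  obtain ⟨i, j, hij⟩ := exists_pair_ne ι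
  by_cases hall : ∀ k, W k ≤ v.ker
  · exact eq_zero_of_isCompl_of_le_ker (hcompl hij) (hall i) (hall j)
  obtain ⟨k, hkv⟩ := not_forall.mp hall
  have hku : W k ≤ u.ker := (hor k).resolve_right hkv
  have hcover : (u.ker : Set V) ⊆ W k ∪ v.ker := by
    refine fun x hux ↦ or_iff_not_imp_right.mpr fun hvx ↦ ?_
    have hx0 : x ≠ 0 := fun h ↦ hvx (h ▸ zero_mem _)
    have hfx : f x ≠ 0 := fun h ↦ hvx (hagree x hx0 (h.trans (LinearMap.mem_ker.mp hux).symm))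
    obtain ⟨l, hl⟩ := (hsupp x hx0).mp hfx
    have hlu : W l ≤ u.ker := (hor l).resolve_right fun h ↦ hvx (h hl)
    obtain rfl : l = k := by_contra fun hlk ↦
      hu (eq_zero_of_isCompl_of_le_ker (hcompl hlk) hlu hku)
    exact hl
  have hker : u.ker ≤ W k :=
    (AddSubgroupClass.subset_union.mp hcover).resolve_right fun h ↦ hkv (hku.trans h)
  have hfinrank_ker : finrank F u.ker + 1 = finrank F V := Dual.finrank_ker_add_one_of_ne_zero hu
  have hfinrank_le : finrank F u.ker ≤ t := hdim k ▸ Submodule.finrank_mono hker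
  have hfinrank_add := Submodule.finrank_add_eq_of_isCompl (hcompl hij)
  rw [hdim, hdim] at hfinrank_add
  lia

lemma eq_zero_of_cover_compl_ker [Finite F] [Finite ι] [FiniteDimensional F V]
    (hcard : Nat.card ι * Nat.card F ^ t < Nat.card F ^ finrank F V)
    (hdim : ∀ k, finrank F (W k) = t) {v : Dual F V}
    (hcover : ∀ x, v x ≠ 0 → ∃ k, x ∈ W k) : v = 0 := by
  have : Finite V := Module.finite_of_finite F
  have : Fintype ι := Fintype.ofFinite ι
  by_contra hv
  have hle := natCard_le_sum_natCard_of_cover_compl_ker hv hcover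
  have hV : Nat.card V = Nat.card F ^ finrank F V := Module.natCard_eq_pow_finrank
  have hW (k : ι) : Nat.card (W k) = Nat.card F ^ t := hdim k ▸ Module.natCard_eq_pow_finrank
  rw [hV, Finset.sum_congr rfl fun k _ ↦ hW k, Finset.sum_const, Finset.card_univ, smul_eq_mul,
    ← Nat.card_eq_fintype_card] at hle
  exact hle.not_gt hcard

lemma eq_zero_of_agree_imp_apply_eq_zero [Finite F] [Finite ι] [Nontrivial ι]
    [FiniteDimensional F V] (ht : 2 ≤ t) (hcard : Nat.card ι < Nat.card F ^ t)
    (hdim : ∀ k, finrank F (W k) = t) (hcompl : Pairwise (Function.onFun IsCompl W))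
    (hsmul : ∀ (c : Fˣ) (x : V), f (c • x) = f x)
    (hsupp : ∀ x, x ≠ 0 → (f x ≠ 0 ↔ ∃ k, x ∈ W k)) {u v : Dual F V}
    (hagree : ∀ x, x ≠ 0 → f x = u x → v x = 0) : v = 0 := by
  rcases eq_or_ne u 0 with rfl | hu
  · have hcard_mul : Nat.card ι * Nat.card F ^ t < Nat.card F ^ finrank F V := by
      obtain ⟨i, j, hij⟩ := exists_pair_ne ι
      rw [← Submodule.finrank_add_eq_of_isCompl (hcompl hij), hdim, hdim, pow_add]
      gcongr
      exact pow_pos Nat.card_pos t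
    refine eq_zero_of_cover_compl_ker hcard_mul hdim fun x hvx ↦ ?_
    have hx0 : x ≠ 0 := fun h ↦ hvx (h ▸ map_zero v)
    exact (hsupp x hx0).mp fun hfx ↦ hvx (hagree x hx0 hfx)
  · exact eq_zero_of_agree_imp_apply_eq_zero_of_ne_zero ht hdim hcompl hsmul hsupp hu hagree

lemma coeff_eq_zero_of_ker_imp_eq_zero [Nontrivial Fˣ]
    (hsmul : ∀ (c : Fˣ) (x : V), f (c • x) = f x) {p : Submodule F V} (hp : 1 < finrank F p)
    (hne : ∀ x ∈ p, x ≠ 0 → f x ≠ 0) {φ ψ : Dual F V} {β : F}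
    (hzero : ∀ x, x ≠ 0 → φ x = 0 → β * f x + ψ x = 0) : β = 0 := by
  obtain ⟨c, hc⟩ := exists_ne (1 : Fˣ)
  obtain ⟨x, hxp, hx0, hφx⟩ := exists_mem_ne_zero_apply_eq_zero φ hp
  have hx : β * f x + ψ x = 0 := hzero x hx0 hφx
  have hcx : β * f x + c * ψ x = 0 := by
    have hcx := hzero (c • x) ((smul_ne_zero_iff_ne c).mpr hx0) (by simp [Units.smul_def, hφx])
    rwa [hsmul, Units.smul_def, map_smul, smul_eq_mul] at hcx
  have hψx : ψ x = 0 := by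
    have hmul : ((c : F) - 1) * ψ x = 0 := by linear_combination hcx - hx
    exact (mul_eq_zero.mp hmul).resolve_left (by simpa [sub_eq_zero] using hc)
  simpa [hψx, hne x hxp hx0] using hx

lemma map_units_smul_of_const_on_submodules {a : ι → F} (hval : ∀ k x, x ≠ 0 → x ∈ W k → f x = a k)
    (hzero : ∀ x, (∀ k, x ∉ W k) → f x = 0) (c : Fˣ) (x : V) : f (c • x) = f x := by
  rcases eq_or_ne x 0 with rfl | hx0
  · rw [smul_zero]
  by_cases hx : ∃ k, x ∈ W k
  · obtain ⟨k, hk⟩ := hx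
    rw [hval k x hx0 hk,
      hval k (c • x) ((smul_ne_zero_iff_ne c).mpr hx0) ((W k).smul_of_tower_mem c hk)]
  · rw [not_exists] at hx
    rw [hzero x hx, hzero (c • x) fun k hk ↦ hx k (((W k).smul_mem_iff' c).mp hk)]

lemma ne_zero_iff_exists_mem_of_const_on_submodules {a : ι → F} (ha : ∀ k, a k ≠ 0)
    (hval : ∀ k x, x ≠ 0 → x ∈ W k → f x = a k) (hzero : ∀ x, (∀ k, x ∉ W k) → f x = 0)
    (x : V) (hx0 : x ≠ 0) : f x ≠ 0 ↔ ∃ k, x ∈ W k := by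
  refine ⟨fun hfx ↦ ?_, fun ⟨k, hk⟩ ↦ hval k x hx0 hk ▸ ha k⟩
  by_contra! hx
  exact hfx (hzero x hx)

theorem stmt0_general [Finite F] [Nontrivial Fˣ] [Finite ι] [Nontrivial ι] (ht : 2 ≤ t)
    (hfinrank : finrank F V = 2 * t) (hcard : Nat.card ι < Nat.card F ^ t)
    (hdim : ∀ k, finrank F (W k) = t) (hdisj : Pairwise (Function.onFun Disjoint W))
    (hsmul : ∀ (c : Fˣ) (x : V), f (c • x) = f x)
    (hsupp : ∀ x, x ≠ 0 → (f x ≠ 0 ↔ ∃ k, x ∈ W k)) :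
    IsMinimalCode (functionCode f) := by
  have : FiniteDimensional F V := Module.finite_of_finrank_pos (by lia)
  have hcompl : Pairwise (Function.onFun IsCompl W) := fun i j hij ↦
    (Submodule.isCompl_iff_disjoint _ _ (by rw [hdim, hdim]; lia)).mpr (hdisj hij)
  obtain ⟨k⟩ : Nonempty ι := inferInstance
  refine isMinimalCode_functionCode_of_forall (fun φ ψ β hzero ↦ ?_) fun u v hagree ↦ ?_
  · exact coeff_eq_zero_of_ker_imp_eq_zero hsmul (p := W k) (by rwa [hdim])
      (fun x hx hx0 ↦ (hsupp x hx0).mpr ⟨k, hx⟩) hzero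
  · exact eq_zero_of_agree_imp_apply_eq_zero ht hcard hdim hcompl hsmul hsupp hagree

end PartialSpread

theorem stmt0 (t n s : ℕ) (ht : n = 2 * t) (hn : 6 ≤ n) (hs : 1 ≤ s)
    (hs2 : 2 * s < 3 ^ t + 1)
    (W : Fin (2 * s) → Submodule (ZMod 3) (Fin n → ZMod 3))
    (hdim : ∀ k, Module.finrank (ZMod 3) (W k) = t)
    (hdisj : ∀ i j, i ≠ j → W i ⊓ W j = ⊥)
    (f : (Fin n → ZMod 3) → ZMod 3)
    (hf1 : ∀ (x : Fin n → ZMod 3) (k : Fin (2 * s)), x ≠ 0 → x ∈ W k → (k : ℕ) < s → f x = 1)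
    (hf2 : ∀ (x : Fin n → ZMod 3) (k : Fin (2 * s)), x ≠ 0 → x ∈ W k → s ≤ (k : ℕ) → f x = 2)
    (hf0 : ∀ x : Fin n → ZMod 3, (x = 0 ∨ ∀ k, x ∉ W k) → f x = 0)
    (C : Set ({x : Fin n → ZMod 3 // x ≠ 0} → ZMod 3))
    (hC : C = {c | ∃ (α : ZMod 3) (w : Fin n → ZMod 3),
      c = fun x => α * f x.1 + w ⬝ᵥ x.1})
    :
    ∀ c ∈ C, c ≠ 0 → ∀ c' ∈ C, (∀ i, c' i ≠ 0 → c i ≠ 0) →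
      ∃ lam : ZMod 3, c' = lam • c := by
  subst ht
  have hval (k : Fin (2 * s)) (x : Fin (2 * t) → ZMod 3) (hx0 : x ≠ 0) (hx : x ∈ W k) :
      f x = if (k : ℕ) < s then 1 else 2 := by
    split_ifs with hk
    exacts [hf1 x k hx0 hx hk, hf2 x k hx0 hx (not_lt.mp hk)]
  have hzero (x : Fin (2 * t) → ZMod 3) (hx : ∀ k, x ∉ W k) : f x = 0 := hf0 x (.inr hx)
  have hcard : Nat.card (Fin (2 * s)) < Nat.card (ZMod 3) ^ t := by
    have hodd : Odd (3 ^ t) := Odd.pow (by decide)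
    rw [Nat.card_fin, Nat.card_zmod]
    grind
  have : Nontrivial (ZMod 3)ˣ := ⟨1, -1, by decide⟩
  have : Nontrivial (Fin (2 * s)) := Fin.nontrivial_iff_two_le.mpr (by lia)
  rw [hC, ← coe_functionCode_pi]
  exact stmt0_general (by lia) (Module.finrank_fin_fun _) hcard hdim
    (fun i j hij ↦ disjoint_iff.mpr (hdisj i j hij))
    (map_units_smul_of_const_on_submodules hval hzero)
    (ne_zero_iff_exists_mem_of_const_on_submodules (fun k ↦ by split_ifs <;> decide) hval hzero)
end

section
/- Let n = 2t be an even positive integer, s ≥ 1 an integer, and W_1, …, W_{2s} pairwise disjoint t-dimensional F_3-linear subspaces of F_3^n, with f the associated ternary partial-spread function. Then the real part of the Walsh transform of f satisfies: Re(f̂(0)) = 3^n − 3s(3^t − 1); Re(f̂(w)) = 3s for every w ∈ F_3^n with w ∉ W_k^⊥ for all 1 ≤ k ≤ 2s; and Re(f̂(w)) = 3s − 3^{t+1}/2 for every nonzero w ∈ F_3^n with w ∈ W_k^⊥ for some 1 ≤ k ≤ 2s. -/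
open Matrix Finset

/-!
Off the origin every point lies in at most one `W k`, so `ζ ^ f - 1` is the sum over `k` of
`ζ ^ c k - 1` times the indicator of `W k \ {0}`, where `c k` is the value of `f` there.
A character sum over a subspace is its cardinality or zero, which gives `f̂ w` explicitly in terms
of the `k` with `w ∈ (W k)ᗮ`. The two nontrivial cube roots of unity have the same real part
`-1 / 2`, so the colours disappear from `Re (f̂ w)`; and since two distinct `W k` span the whole
space, a nonzero `w` is orthogonal to at most one of them.
-/

section CharacterSums

variable {R A : Type*} [CommRing R] [CommRing A] [IsDomain A] {ψ : AddChar R A}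

open scoped Classical in
theorem sum_addChar_linearMap {M : Type*} [AddCommGroup M] [Module R M] [Fintype M]
    (hψ : ψ.IsPrimitive) (φ : M →ₗ[R] R) :
    ∑ x, ψ (φ x) = if φ = 0 then (Nat.card M : A) else 0 := by
  have comp_eq_zero_iff : ψ.compAddMonoidHom φ.toAddMonoidHom = 0 ↔ φ = 0 := by
    refine ⟨fun hcomp ↦ ?_, fun hφ ↦ by ext; simp [hφ]⟩
    by_contra! hφ
    obtain ⟨x, hx⟩ := DFunLike.ne_iff.mp hφ
    obtain ⟨r, hr⟩ := AddChar.ne_one_iff.mp (hψ hx)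
    refine hr ?_
    simpa [mul_comm] using DFunLike.congr_fun hcomp (r • x)
  simpa only [AddChar.compAddMonoidHom_apply, LinearMap.toAddMonoidHom_coe, comp_eq_zero_iff,
    Nat.card_eq_fintype_card] using AddChar.sum_eq_ite (ψ.compAddMonoidHom φ.toAddMonoidHom)

variable {ι : Type*} [Fintype ι] [DecidableEq ι] [Fintype R]

open scoped Classical in
theorem sum_addChar_neg_dotProduct (hψ : ψ.IsPrimitive) (w : ι → R) :
    ∑ x, ψ (-(w ⬝ᵥ x)) = if w = 0 then (Nat.card (ι → R) : A) else 0 := by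
  have functional_eq_zero_iff : -dotProductBilin R R w = 0 ↔ w = 0 := by
    simp [LinearMap.ext_iff, dotProduct_eq_zero_iff]
  simpa [functional_eq_zero_iff] using sum_addChar_linearMap hψ (-dotProductBilin R R w)

open scoped Classical in
theorem sum_mem_submodule_addChar_neg_dotProduct (hψ : ψ.IsPrimitive) (V : Submodule R (ι → R))
    (w : ι → R) :
    ∑ x with x ∈ V, ψ (-(w ⬝ᵥ x)) = if ∀ x ∈ V, w ⬝ᵥ x = 0 then (Nat.card V : A) else 0 := by
  have functional_eq_zero_iff :
      -(dotProductBilin R R w).domRestrict V = 0 ↔ ∀ x ∈ V, w ⬝ᵥ x = 0 := by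
    simp [LinearMap.ext_iff]
  rw [sum_subtype (p := (· ∈ V)) _ (by simp)]
  simpa [functional_eq_zero_iff] using
    sum_addChar_linearMap hψ (-(dotProductBilin R R w).domRestrict V)

open scoped Classical in
theorem sum_mem_submodule_ne_zero_addChar_neg_dotProduct (hψ : ψ.IsPrimitive)
    (V : Submodule R (ι → R)) (w : ι → R) :
    ∑ x with x ∈ V ∧ x ≠ 0, ψ (-(w ⬝ᵥ x)) =
      (if ∀ x ∈ V, w ⬝ᵥ x = 0 then (Nat.card V : A) else 0) - 1 := by
  have filter_eq_erase :
      ({x | x ∈ V ∧ x ≠ 0} : Finset (ι → R)) = ({x | x ∈ V} : Finset _).erase 0 := by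
    ext x
    simp [and_comm]
  rw [filter_eq_erase, sum_erase_eq_sub (by simp), sum_mem_submodule_addChar_neg_dotProduct hψ]
  simp

end CharacterSums

section PartialSpread

/-- The Walsh transform of `f : R ^ ι → R` with respect to an additive character `ψ` of `R`;
for `R = ZMod p` and `ψ = ZMod.stdAddChar` it is `w ↦ ∑ x, ζ ^ (f x - w · x)` with
`ζ = exp (2 π i / p)`. -/
def walshTransform {R A ι : Type*} [CommRing R] [Fintype R] [CommRing A] [Fintype ι]
    [DecidableEq ι] (ψ : AddChar R A) (f : (ι → R) → R) (w : ι → R) : A :=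
  ∑ x, ψ (f x - w ⬝ᵥ x)

/-- The function `f` is the partial-spread function of the pairwise disjoint submodules `W k` with
colours `c k`: it is `c k` on `W k \ {0}` and vanishes at `0` and off the union of the `W k`.
The dimensions of the `W k` are left free. -/
structure IsPartialSpreadFunction {R ι κ : Type*} [CommRing R] (W : κ → Submodule R (ι → R))
    (c : κ → R) (f : (ι → R) → R) : Prop where
  pairwise_disjoint : Pairwise (Function.onFun Disjoint W)
  apply_of_mem : ∀ {x k}, x ≠ 0 → x ∈ W k → f x = c k
  apply_zero : f 0 = 0
  apply_of_forall_notMem : ∀ {x}, (∀ k, x ∉ W k) → f x = 0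

namespace IsPartialSpreadFunction

theorem of_two_colours {R ι : Type*} [CommRing R] {m s : ℕ} {W : Fin m → Submodule R (ι → R)}
    {a b : R} {f : (ι → R) → R} (hdisj : ∀ i j, i ≠ j → W i ⊓ W j = ⊥)
    (hlt : ∀ x (k : Fin m), x ≠ 0 → x ∈ W k → (k : ℕ) < s → f x = a)
    (hle : ∀ x (k : Fin m), x ≠ 0 → x ∈ W k → s ≤ (k : ℕ) → f x = b)
    (hzero : ∀ x, (x = 0 ∨ ∀ k, x ∉ W k) → f x = 0) :
    IsPartialSpreadFunction W (fun k ↦ if (k : ℕ) < s then a else b) f where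
  pairwise_disjoint i j hij := disjoint_iff.mpr (hdisj i j hij)
  apply_of_mem {x k} hx hk := by
    split_ifs with hks
    exacts [hlt x k hx hk hks, hle x k hx hk (not_lt.mp hks)]
  apply_zero := hzero 0 (.inl rfl)
  apply_of_forall_notMem hx := hzero _ (.inr hx)

variable {R A ι κ : Type*} [CommRing R] [CommRing A] [Fintype κ]
  {W : κ → Submodule R (ι → R)} {c : κ → R} {f : (ι → R) → R}

open scoped Classical in
theorem addChar_apply_sub_one (hf : IsPartialSpreadFunction W c f) (ψ : AddChar R A) (x : ι → R) :
    ψ (f x) - 1 = ∑ k with x ∈ W k ∧ x ≠ 0, (ψ (c k) - 1) := by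
  by_cases hx : x = 0
  · simp [hx, hf.apply_zero]
  by_cases hmem : ∃ k, x ∈ W k
  · obtain ⟨k, hk⟩ := hmem
    have mem_iff_eq (j : κ) : x ∈ W j ↔ j = k := by
      refine ⟨fun hj ↦ ?_, fun hjk ↦ hjk ▸ hk⟩
      by_contra hjk
      exact hx (Submodule.disjoint_def.mp (hf.pairwise_disjoint hjk) x hj hk)
    simp [mem_iff_eq, hx, hf.apply_of_mem hx hk, sum_filter, -sum_sub_distrib]
  · have hnotMem : ∀ k, x ∉ W k := not_exists.mp hmem
    simp [hnotMem, hf.apply_of_forall_notMem hnotMem]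

variable [Fintype R] [IsDomain A] [Fintype ι] [DecidableEq ι]

open scoped Classical in
theorem walshTransform_eq (hf : IsPartialSpreadFunction W c f) {ψ : AddChar R A}
    (hψ : ψ.IsPrimitive) (w : ι → R) :
    walshTransform ψ f w = (if w = 0 then (Nat.card (ι → R) : A) else 0) +
      ∑ k, (ψ (c k) - 1) * ((if ∀ x ∈ W k, w ⬝ᵥ x = 0 then (Nat.card (W k) : A) else 0) - 1) := by
  calc
    walshTransform ψ f w = ∑ x, (ψ (-(w ⬝ᵥ x)) + (ψ (f x) - 1) * ψ (-(w ⬝ᵥ x))) :=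
      sum_congr rfl fun x _ ↦ by rw [sub_eq_add_neg, AddChar.map_add_eq_mul]; ring
    _ = ∑ x, ψ (-(w ⬝ᵥ x)) +
        ∑ k, (ψ (c k) - 1) * ∑ x with x ∈ W k ∧ x ≠ 0, ψ (-(w ⬝ᵥ x)) := by
      simp_rw [sum_add_distrib, hf.addChar_apply_sub_one ψ, sum_mul, mul_sum]
      congr 1
      exact sum_comm' (by simp)
    _ = _ := by
      simp_rw [sum_addChar_neg_dotProduct hψ, sum_mem_submodule_ne_zero_addChar_neg_dotProduct hψ]

end IsPartialSpreadFunction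

end PartialSpread

section Orthogonality

variable {ι : Type*} [Fintype ι]

theorem eq_zero_of_dotProduct_eq_zero_of_sup_eq_top {R : Type*} [Semiring R]
    {U V : Submodule R (ι → R)} (hUV : U ⊔ V = ⊤) {w : ι → R}
    (hU : ∀ x ∈ U, w ⬝ᵥ x = 0) (hV : ∀ x ∈ V, w ⬝ᵥ x = 0) : w = 0 := by
  refine dotProduct_eq_zero_iff.mp fun x ↦ ?_
  obtain ⟨u, hu, v, hv, rfl⟩ := Submodule.mem_sup.mp (hUV ▸ Submodule.mem_top : x ∈ U ⊔ V)
  rw [dotProduct_add, hU u hu, hV v hv, add_zero]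

theorem forall_dotProduct_eq_zero_iff_eq {K κ : Type*} [Field K]
    {W : κ → Submodule K (ι → K)} {t : ℕ}
    (hι : Fintype.card ι = 2 * t) (hdim : ∀ k, Module.finrank K (W k) = t)
    (hdisj : Pairwise (Function.onFun Disjoint W)) {w : ι → K} (hw : w ≠ 0) {k : κ}
    (hk : ∀ x ∈ W k, w ⬝ᵥ x = 0) (j : κ) : (∀ x ∈ W j, w ⬝ᵥ x = 0) ↔ j = k := by
  refine ⟨fun hj ↦ ?_, fun hjk ↦ hjk ▸ hk⟩
  by_contra hjk
  have sup_eq_top : W j ⊔ W k = ⊤ := by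
    refine Submodule.eq_top_of_disjoint _ _ ?_ (hdisj hjk)
    rw [Module.finrank_fintype_fun_eq_card, hdim, hdim, hι, two_mul]
  exact hw (eq_zero_of_dotProduct_eq_zero_of_sup_eq_top sup_eq_top hj hk)

end Orthogonality

section Ternary

theorem exp_two_pi_I_div_pow_val {N : ℕ} [NeZero N] (a : ZMod N) :
    Complex.exp (2 * Real.pi * Complex.I / N) ^ a.val = ZMod.stdAddChar a := by
  rw [← Complex.exp_nat_mul, ZMod.stdAddChar_apply, ZMod.toCircle_apply]
  congr 1
  ring

theorem re_addChar_zmod_three {ψ : AddChar (ZMod 3) ℂ} (hψ : ψ.IsPrimitive) {a : ZMod 3}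
    (ha : a ≠ 0) : (ψ a).re = -1 / 2 := by
  have two_mul_eq_neg : ∀ b : ZMod 3, 2 * b = -b := by decide
  have sum_eq_zero : ψ (0 * a) + ψ (1 * a) + ψ (2 * a) = 0 := by
    have sum_mulShift := AddChar.sum_mulShift a hψ
    rw [if_neg ha, Nat.cast_zero] at sum_mulShift
    exact (Fin.sum_univ_three fun b : ZMod 3 ↦ ψ (b * a)).symm.trans sum_mulShift
  rw [zero_mul, one_mul, two_mul_eq_neg, AddChar.map_zero_eq_one, AddChar.map_neg_eq_conj]
    at sum_eq_zero
  have re_sum_eq_zero := congrArg Complex.re sum_eq_zero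
  simp only [Complex.add_re, Complex.one_re, Complex.conj_re, Complex.zero_re] at re_sum_eq_zero
  linarith

variable {ι κ : Type*} [Fintype ι] [DecidableEq ι] [Fintype κ] {t : ℕ}
  {W : κ → Submodule (ZMod 3) (ι → ZMod 3)} {c : κ → ZMod 3} {f : (ι → ZMod 3) → ZMod 3}
  {ψ : AddChar (ZMod 3) ℂ}

open scoped Classical in
theorem IsPartialSpreadFunction.re_walshTransform (hf : IsPartialSpreadFunction W c f)
    (hdim : ∀ k, Module.finrank (ZMod 3) (W k) = t) (hc : ∀ k, c k ≠ 0) (hψ : ψ.IsPrimitive)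
    (w : ι → ZMod 3) :
    (walshTransform ψ f w).re = (if w = 0 then 3 ^ Fintype.card ι else 0) -
      3 / 2 * ∑ k, ((if ∀ x ∈ W k, w ⬝ᵥ x = 0 then 3 ^ t else 0) - 1 : ℝ) := by
  have card_submodule (k : κ) : Nat.card (W k) = 3 ^ t := by
    rw [Module.natCard_eq_pow_finrank (K := ZMod 3), Nat.card_zmod, hdim]
  have re_colour_sub_one (k : κ) : (ψ (c k) - 1).re = -(3 / 2) := by
    rw [Complex.sub_re, re_addChar_zmod_three hψ (hc k), Complex.one_re]
    norm_num
  have walsh_eq : walshTransform ψ f w =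
      ((if w = 0 then 3 ^ Fintype.card ι else 0 : ℝ) : ℂ) + ∑ k, (ψ (c k) - 1) *
        (((if ∀ x ∈ W k, w ⬝ᵥ x = 0 then 3 ^ t else 0) - 1 : ℝ) : ℂ) := by
    simp_rw [hf.walshTransform_eq hψ, card_submodule]
    simp [apply_ite]
  simp only [walsh_eq, Complex.add_re, Complex.ofReal_re, Complex.re_sum, Complex.re_mul_ofReal,
    re_colour_sub_one, ← mul_sum]
  ring

theorem stmt4_general [Nonempty κ] (hι : Fintype.card ι = 2 * t)
    (hdim : ∀ k, Module.finrank (ZMod 3) (W k) = t) (hc : ∀ k, c k ≠ 0)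
    (hf : IsPartialSpreadFunction W c f) (hψ : ψ.IsPrimitive) :
    (walshTransform ψ f 0).re =
      3 ^ Fintype.card ι - 3 * (Fintype.card κ : ℝ) / 2 * (3 ^ t - 1) ∧
    (∀ w : ι → ZMod 3, (∀ k, ∃ x ∈ W k, w ⬝ᵥ x ≠ 0) →
      (walshTransform ψ f w).re = 3 * (Fintype.card κ : ℝ) / 2) ∧
    (∀ w : ι → ZMod 3, w ≠ 0 → (∃ k, ∀ x ∈ W k, w ⬝ᵥ x = 0) →
      (walshTransform ψ f w).re = 3 * (Fintype.card κ : ℝ) / 2 - 3 ^ (t + 1) / 2) := by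
  classical
  refine ⟨?_, fun w hw ↦ ?_, fun w hw ⟨k, hk⟩ ↦ ?_⟩
  · simp only [hf.re_walshTransform hdim hc hψ, zero_dotProduct, implies_true, if_true, sum_const,
      card_univ, nsmul_eq_mul]
    ring
  · have hw0 : w ≠ 0 := by
      rintro rfl
      simpa using hw (Classical.arbitrary κ)
    have not_orthogonal (k : κ) : ¬∀ x ∈ W k, w ⬝ᵥ x = 0 := by simpa using hw k
    simp only [hf.re_walshTransform hdim hc hψ, hw0, not_orthogonal, if_false, sum_const,
      card_univ, nsmul_eq_mul]
    ring
  · simp only [hf.re_walshTransform hdim hc hψ, hw, if_false, sum_sub_distrib, sum_ite_eq',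
      forall_dotProduct_eq_zero_iff_eq hι hdim hf.pairwise_disjoint hw hk, mem_univ, if_true,
      sum_const, card_univ, nsmul_eq_mul]
    ring

end Ternary

theorem stmt4 (t n s : ℕ) (ht : n = 2 * t) (ht1 : 1 ≤ t) (hs : 1 ≤ s)
    (W : Fin (2 * s) → Submodule (ZMod 3) (Fin n → ZMod 3))
    (hdim : ∀ k, Module.finrank (ZMod 3) (W k) = t)
    (hdisj : ∀ i j, i ≠ j → W i ⊓ W j = ⊥)
    (f : (Fin n → ZMod 3) → ZMod 3)
    (hf1 : ∀ (x : Fin n → ZMod 3) (k : Fin (2 * s)), x ≠ 0 → x ∈ W k → (k : ℕ) < s → f x = 1)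
    (hf2 : ∀ (x : Fin n → ZMod 3) (k : Fin (2 * s)), x ≠ 0 → x ∈ W k → s ≤ (k : ℕ) → f x = 2)
    (hf0 : ∀ x : Fin n → ZMod 3, (x = 0 ∨ ∀ k, x ∉ W k) → f x = 0)
    (walsh : (Fin n → ZMod 3) → ℂ)
    (hwalsh : ∀ w : Fin n → ZMod 3, walsh w = ∑ x : Fin n → ZMod 3,
      Complex.exp (2 * Real.pi * Complex.I / 3) ^ ((f x - w ⬝ᵥ x).val))
    :
    (walsh 0).re = 3 ^ n - 3 * (s : ℝ) * (3 ^ t - 1) ∧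
    (∀ w : Fin n → ZMod 3, (∀ k, ∃ x ∈ W k, w ⬝ᵥ x ≠ 0) → (walsh w).re = 3 * (s : ℝ)) ∧
    (∀ w : Fin n → ZMod 3, w ≠ 0 → (∃ k, ∀ x ∈ W k, w ⬝ᵥ x = 0) →
      (walsh w).re = 3 * (s : ℝ) - 3 ^ (t + 1) / 2) := by
  have : NeZero (2 * s) := ⟨by omega⟩
  have walsh_eq : walsh = walshTransform ZMod.stdAddChar f := funext fun w ↦
    (hwalsh w).trans (sum_congr rfl fun x _ ↦ exp_two_pi_I_div_pow_val (f x - w ⬝ᵥ x))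
  have colour_ne_zero (k : Fin (2 * s)) : (if (k : ℕ) < s then 1 else 2 : ZMod 3) ≠ 0 := by
    split_ifs <;> decide
  have three_mul_two_mul_div_two : 3 * ((2 * s : ℕ) : ℝ) / 2 = 3 * s := by
    push_cast
    ring
  simpa only [walsh_eq, Fintype.card_fin, three_mul_two_mul_div_two] using
    stmt4_general ((Fintype.card_fin n).trans ht) hdim colour_ne_zero
      (.of_two_colours hdisj hf1 hf2 hf0) (ZMod.isPrimitive_stdAddChar 3)
end

section
/- Let n = 2t be an even positive integer, s ≥ 1 an integer, and W_1, …, W_{2s} pairwise disjoint t-dimensional F_3-linear subspaces of F_3^n, with f the associated ternary partial-spread function. Then the Hamming weights of the codewords c_{α,w} of C_f are: wt(c_{0,w}) = 2·3^{n−1} for every w ≠ 0; wt(c_{α,0}) = 2s(3^t − 1) for α ∈ {1, 2}; wt(c_{α,w}) = 2·3^{n−1} − 2s for α ∈ {1, 2} and every w with w ∉ W_k^⊥ for all 1 ≤ k ≤ 2s; and wt(c_{α,w}) = 2·3^{n−1} + 3^t − 2s for α ∈ {1, 2} and every nonzero w with w ∈ W_k^⊥ for some 1 ≤ k ≤ 2s.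 -/
open Matrix Finset

/-!
Away from the subspaces `W k`, the word `f + φ` agrees with the linear functional `φ`. On `W k` it
is `c k + φ` with the value at `0` replaced by `0`, and `c k + φ` is either a translate of `φ` (if
`φ` is nonzero on `W k`) or a nonzero constant (if `φ` vanishes on `W k`). Hence every subspace
lowers the weight of `φ` by `1`, except that one on which `φ` vanishes also adds its cardinality:
`wt (f + φ) + #ι = wt φ + ∑_{k : W k ≤ ker φ} |W k|`.
Two distinct `W k` of half dimension span the whole space, so a nonzero `φ` vanishes on at most one.
-/

section HammingNorm

variable {X M : Type*} [Fintype X] [Zero M] [DecidableEq M]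

theorem hammingNorm_subtype (p : X → Prop) [DecidablePred p] [Fintype {x // p x}] (g : X → M) :
    hammingNorm (fun x : {x // p x} => g x) = #{x | p x ∧ g x ≠ 0} := by
  rw [hammingNorm, ← card_map (Function.Embedding.subtype p)]
  congr 1
  ext x
  simp [and_comm]

theorem hammingNorm_subtype_ne [DecidableEq X] {g : X → M} {a : X} (ha : g a = 0) :
    hammingNorm (fun x : {x // x ≠ a} => g x) = hammingNorm g := by
  rw [hammingNorm_subtype, hammingNorm]
  congr 1
  ext x
  simp only [mem_filter, mem_univ, true_and, and_iff_right_iff_imp]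
  rintro hx rfl
  exact hx ha

theorem hammingNorm_update_zero_add_one [DecidableEq X] {g : X → M} {a : X} (ha : g a ≠ 0) :
    hammingNorm (Function.update g a 0) + 1 = hammingNorm g := by
  have support_update : ({x | Function.update g a 0 x ≠ 0} : Finset X) =
      ({x | g x ≠ 0} : Finset X).erase a := by
    ext x
    by_cases hx : x = a <;> simp [hx]
  rw [hammingNorm, support_update, card_erase_add_one (by simpa using ha), hammingNorm]

theorem hammingNorm_comp_equiv {Y : Type*} [Fintype Y] (e : X ≃ Y) (g : Y → M) :
    hammingNorm (fun x => g (e x)) = hammingNorm g :=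
  card_equiv e (by simp)

theorem hammingNorm_const {a : M} (ha : a ≠ 0) :
    hammingNorm (fun _ : X => a) = Fintype.card X := by
  simp [hammingNorm, ha]

theorem hammingNorm_eq_card_add_sum_submodule {R V ι : Type*} [Semiring R] [AddCommMonoid V]
    [Module R V] [Fintype V] [Fintype ι] {W : ι → Submodule R V} [∀ k, DecidablePred (· ∈ W k)]
    (hW : Pairwise (Function.onFun Disjoint W)) {g : V → M} (hg : g 0 = 0) :
    hammingNorm g = #{x | (∀ k, x ∉ W k) ∧ g x ≠ 0} + ∑ k, hammingNorm (fun x : W k => g x) := by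
  classical
  have supports_disjoint : ((univ : Finset ι) : Set ι).PairwiseDisjoint
      fun k => ({x | x ∈ W k ∧ g x ≠ 0} : Finset V) := by
    intro i _ j _ hij
    refine Finset.disjoint_left.2 fun x hxi hxj => ?_
    simp only [mem_filter, mem_univ, true_and] at hxi hxj
    exact hxi.2 (Submodule.disjoint_def.1 (hW hij) x hxi.1 hxj.1 ▸ hg)
  simp_rw [hammingNorm_subtype (· ∈ W _)]
  rw [← card_biUnion supports_disjoint, hammingNorm,
    ← card_filter_add_card_filter_not (fun x => ∀ k, x ∉ W k), filter_filter, filter_filter]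
  congr 2 <;> ext x <;> simp [and_comm]

end HammingNorm

theorem linearMap_eq_zero_of_isCompl_of_le_ker {R V M : Type*} [Semiring R] [AddCommMonoid V]
    [Module R V] [AddCommMonoid M] [Module R M] {φ : V →ₗ[R] M} {U U' : Submodule R V}
    (h : IsCompl U U') (hU : U ≤ φ.ker) (hU' : U' ≤ φ.ker) : φ = 0 :=
  LinearMap.ker_eq_top.1 (top_le_iff.1 (h.sup_eq_top ▸ sup_le hU hU'))

section Dual

variable {K V : Type*} [Field K] [DecidableEq K] [AddCommGroup V] [Module K V] [Fintype V]

theorem hammingNorm_dual_zero : hammingNorm ⇑(0 : Module.Dual K V) = 0 :=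
  hammingNorm_zero

theorem hammingNorm_dual_of_ne_zero [Fintype K] {φ : Module.Dual K V} (hφ : φ ≠ 0) :
    hammingNorm ⇑φ = (Fintype.card K - 1) * Fintype.card K ^ (Module.finrank K V - 1) := by
  classical
  have finrank_eq := Module.Dual.finrank_ker_add_one_of_ne_zero hφ
  have card_ker : #{x | φ x = 0} = Fintype.card K ^ (Module.finrank K V - 1) := by
    rw [← finrank_eq, Nat.add_sub_cancel, ← Module.card_eq_pow_finrank (V := φ.ker)]
    exact (Fintype.card_of_subtype _ (by simp)).symm
  have card_split : #{x | φ x = 0} + hammingNorm ⇑φ =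
      Fintype.card K * Fintype.card K ^ (Module.finrank K V - 1) := by
    rw [hammingNorm, card_filter_add_card_filter_not, card_univ,
      Module.card_eq_pow_finrank (K := K), ← pow_succ', ← finrank_eq, Nat.add_sub_cancel]
  rw [Nat.sub_one_mul]
  omega

theorem hammingNorm_const_add_dual (c : K) {φ : Module.Dual K V} (hφ : φ ≠ 0) :
    hammingNorm (fun x => c + φ x) = hammingNorm ⇑φ := by
  obtain ⟨u, rfl⟩ := LinearMap.surjective hφ c
  simp_rw [← map_add]
  exact hammingNorm_comp_equiv (Equiv.addLeft u) φ

theorem hammingNorm_update_const_add_dual_add_one [DecidableEq V] {c : K} (hc : c ≠ 0)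
    (φ : Module.Dual K V) [Decidable (φ = 0)] :
    hammingNorm (Function.update (fun x => c + φ x) 0 0) + 1 =
      hammingNorm ⇑φ + if φ = 0 then Nat.card V else 0 := by
  rw [hammingNorm_update_zero_add_one (by simpa using hc)]
  split_ifs with hφ
  · simp only [hφ, LinearMap.zero_apply, hammingNorm_dual_zero, add_zero, zero_add,
      hammingNorm_const hc, Nat.card_eq_fintype_card]
  · rw [hammingNorm_const_add_dual c hφ, add_zero]

end Dual

/-- `f` is a partial-spread function: the subspaces `W k` meet pairwise only in `0`, and `f` takes
the nonzero value `c k` on `W k \ {0}` and vanishes at `0` and outside `⋃ k, W k`. -/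
structure IsPartialSpreadFunction_s5 {K V ι : Type*} [Field K] [AddCommGroup V] [Module K V]
    (W : ι → Submodule K V) (c : ι → K) (f : V → K) : Prop where
  pairwise_disjoint : Pairwise (Function.onFun Disjoint W)
  value_ne_zero : ∀ k, c k ≠ 0
  apply_of_mem : ∀ k, ∀ x ∈ W k, x ≠ 0 → f x = c k
  apply_zero : f 0 = 0
  apply_of_forall_notMem : ∀ x, (∀ k, x ∉ W k) → f x = 0

namespace IsPartialSpreadFunction_s5

variable {K V ι : Type*} [Field K] [AddCommGroup V] [Module K V]
  {W : ι → Submodule K V} {c : ι → K} {f : V → K}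

theorem of_two_values {p : ι → Prop} [DecidablePred p] {a b : K} (ha : a ≠ 0) (hb : b ≠ 0)
    (hW : ∀ i j, i ≠ j → W i ⊓ W j = ⊥)
    (hfa : ∀ x k, x ≠ 0 → x ∈ W k → p k → f x = a)
    (hfb : ∀ x k, x ≠ 0 → x ∈ W k → ¬ p k → f x = b)
    (hf0 : ∀ x, (x = 0 ∨ ∀ k, x ∉ W k) → f x = 0) :
    IsPartialSpreadFunction_s5 W (fun k => if p k then a else b) f where
  pairwise_disjoint i j hij := disjoint_iff.2 (hW i j hij)
  value_ne_zero k := by split_ifs <;> assumption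
  apply_of_mem k x hx hx0 := by
    split_ifs with hk
    · exact hfa x k hx0 hx hk
    · exact hfb x k hx0 hx hk
  apply_zero := hf0 0 (Or.inl rfl)
  apply_of_forall_notMem x hx := hf0 x (Or.inr hx)

theorem const_mul (hf : IsPartialSpreadFunction_s5 W c f) {α : K} (hα : α ≠ 0) :
    IsPartialSpreadFunction_s5 W (fun k => α * c k) (fun x => α * f x) where
  pairwise_disjoint := hf.pairwise_disjoint
  value_ne_zero k := mul_ne_zero hα (hf.value_ne_zero k)
  apply_of_mem k x hx hx0 := by rw [hf.apply_of_mem k x hx hx0]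
  apply_zero := by rw [hf.apply_zero, mul_zero]
  apply_of_forall_notMem x hx := by rw [hf.apply_of_forall_notMem x hx, mul_zero]

theorem restrict_add_dual (hf : IsPartialSpreadFunction_s5 W c f) (φ : Module.Dual K V) (k : ι)
    [DecidableEq (W k)] :
    (fun x : W k => f x + φ x) =
      Function.update (fun x : W k => c k + φ.domRestrict (W k) x) 0 0 := by
  ext x
  obtain rfl | hx := eq_or_ne x 0
  · simp [hf.apply_zero]
  · simp [hx, hf.apply_of_mem k x x.2 (by simpa using hx)]

variable [DecidableEq K] [Fintype V] [Fintype ι]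

open scoped Classical in
theorem hammingNorm_add_dual_add_card (hf : IsPartialSpreadFunction_s5 W c f)
    (φ : Module.Dual K V) :
    hammingNorm (fun x => f x + φ x) + Fintype.card ι =
      hammingNorm ⇑φ + ∑ k with W k ≤ φ.ker, Nat.card (W k) := by
  have restrict_eq_zero_iff (k : ι) : φ.domRestrict (W k) = 0 ↔ W k ≤ φ.ker := by
    simp [LinearMap.ext_iff, SetLike.le_def]
  have outside_eq : #{x | (∀ k, x ∉ W k) ∧ f x + φ x ≠ 0} =
      #{x | (∀ k, x ∉ W k) ∧ φ x ≠ 0} := by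
    refine congrArg card (filter_congr fun x _ => and_congr_right fun hx => ?_)
    rw [hf.apply_of_forall_notMem x hx, zero_add]
  have inside_eq : ∑ k, hammingNorm (fun x : W k => f x + φ x) + Fintype.card ι =
      ∑ k, hammingNorm (fun x : W k => φ x) + ∑ k with W k ≤ φ.ker, Nat.card (W k) := by
    rw [← card_univ, card_eq_sum_ones, ← sum_add_distrib, sum_filter, ← sum_add_distrib]
    refine sum_congr rfl fun k _ => ?_
    simp_rw [hf.restrict_add_dual φ k, ← restrict_eq_zero_iff]
    exact hammingNorm_update_const_add_dual_add_one (hf.value_ne_zero k) (φ.domRestrict (W k))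
  rw [hammingNorm_eq_card_add_sum_submodule hf.pairwise_disjoint (g := fun x => f x + φ x)
      (by simp [hf.apply_zero]),
    hammingNorm_eq_card_add_sum_submodule hf.pairwise_disjoint (map_zero φ), outside_eq,
    add_assoc, inside_eq, add_assoc]

theorem hammingNorm_add_dual_add_card_of_forall_exists_ne_zero (hf : IsPartialSpreadFunction_s5 W c f)
    {φ : Module.Dual K V} (hφ : ∀ k, ∃ x ∈ W k, φ x ≠ 0) :
    hammingNorm (fun x => f x + φ x) + Fintype.card ι = hammingNorm ⇑φ := by
  classical
  have none_le_ker (k : ι) : ¬ W k ≤ φ.ker := fun hk =>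
    let ⟨_, hx, hφx⟩ := hφ k
    hφx (hk hx)
  rw [hf.hammingNorm_add_dual_add_card, filter_false_of_mem fun k _ => none_le_ker k, sum_empty,
    add_zero]

variable [Fintype K] {t : ℕ}

theorem hammingNorm_eq_card_mul (hf : IsPartialSpreadFunction_s5 W c f)
    (hW : ∀ k, Module.finrank K (W k) = t) :
    hammingNorm f = Fintype.card ι * (Fintype.card K ^ t - 1) := by
  classical
  have card_subspace (k : ι) : Nat.card (W k) = Fintype.card K ^ t := by
    rw [Module.natCard_eq_pow_finrank (K := K), Nat.card_eq_fintype_card, hW]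
  have weight_add_card := hf.hammingNorm_add_dual_add_card 0
  simp only [card_subspace, hammingNorm_dual_zero, LinearMap.zero_apply, add_zero, zero_add,
    LinearMap.ker_zero, le_top, filter_true, sum_const, card_univ, smul_eq_mul]
    at weight_add_card
  rw [Nat.mul_sub_one]
  exact Nat.eq_sub_of_add_eq weight_add_card

theorem hammingNorm_add_dual_add_card_of_exists_forall_eq_zero (hf : IsPartialSpreadFunction_s5 W c f)
    (hV : Module.finrank K V = 2 * t) (hW : ∀ k, Module.finrank K (W k) = t)
    {φ : Module.Dual K V} (hφ : φ ≠ 0) (hker : ∃ k, ∀ x ∈ W k, φ x = 0) :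
    hammingNorm (fun x => f x + φ x) + Fintype.card ι =
      hammingNorm ⇑φ + Fintype.card K ^ t := by
  classical
  obtain ⟨k, hk : W k ≤ φ.ker⟩ := hker
  have unique_le_ker : ({j | W j ≤ φ.ker} : Finset ι) = {k} := by
    refine eq_singleton_iff_unique_mem.2 ⟨by simpa using hk, fun j hj => ?_⟩
    by_contra hjk
    have isCompl : IsCompl (W j) (W k) :=
      (Submodule.isCompl_iff_disjoint _ _ (by rw [hV, hW, hW, two_mul])).2
        (hf.pairwise_disjoint hjk)
    exact hφ (linearMap_eq_zero_of_isCompl_of_le_ker isCompl (by simpa using hj) hk)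
  rw [hf.hammingNorm_add_dual_add_card, unique_le_ker, sum_singleton,
    Module.natCard_eq_pow_finrank (K := K), Nat.card_eq_fintype_card, hW]

end IsPartialSpreadFunction_s5

theorem stmt5_general {K V ι : Type*} [Field K] [Fintype K] [DecidableEq K] [AddCommGroup V]
    [Module K V] [Fintype V] [DecidableEq V] [Fintype ι] [Nonempty ι] {t : ℕ}
    {W : ι → Submodule K V} {c : ι → K} {f : V → K} (hf : IsPartialSpreadFunction_s5 W c f)
    (hV : Module.finrank K V = 2 * t) (hW : ∀ k, Module.finrank K (W k) = t)
    (α : K) (φ : Module.Dual K V) :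
    (α = 0 → φ ≠ 0 →
      hammingNorm (fun x : {x : V // x ≠ 0} => α * f x + φ x) =
        (Fintype.card K - 1) * Fintype.card K ^ (2 * t - 1)) ∧
    (α ≠ 0 → φ = 0 →
      hammingNorm (fun x : {x : V // x ≠ 0} => α * f x + φ x) =
        Fintype.card ι * (Fintype.card K ^ t - 1)) ∧
    (α ≠ 0 → (∀ k, ∃ x ∈ W k, φ x ≠ 0) →
      hammingNorm (fun x : {x : V // x ≠ 0} => α * f x + φ x) =
        (Fintype.card K - 1) * Fintype.card K ^ (2 * t - 1) - Fintype.card ι) ∧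
    (α ≠ 0 → φ ≠ 0 → (∃ k, ∀ x ∈ W k, φ x = 0) →
      hammingNorm (fun x : {x : V // x ≠ 0} => α * f x + φ x) =
        (Fintype.card K - 1) * Fintype.card K ^ (2 * t - 1) + Fintype.card K ^ t -
          Fintype.card ι) := by
  rw [hammingNorm_subtype_ne (g := fun x => α * f x + φ x) (by simp [hf.apply_zero]), ← hV]
  refine ⟨?_, ?_, fun hα hφ => ?_, fun hα hφ hker => ?_⟩
  · rintro rfl hφ
    simpa using hammingNorm_dual_of_ne_zero hφ
  · rintro hα rfl
    simpa using (hf.const_mul hα).hammingNorm_eq_card_mul hW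
  · have hφ0 : φ ≠ 0 := by
      rintro rfl
      simpa using hφ (Classical.arbitrary ι)
    rw [← hammingNorm_dual_of_ne_zero hφ0]
    exact Nat.eq_sub_of_add_eq
      ((hf.const_mul hα).hammingNorm_add_dual_add_card_of_forall_exists_ne_zero hφ)
  · rw [← hammingNorm_dual_of_ne_zero hφ]
    exact Nat.eq_sub_of_add_eq
      ((hf.const_mul hα).hammingNorm_add_dual_add_card_of_exists_forall_eq_zero hV hW hφ hker)

theorem stmt5 (t n s : ℕ) (ht : n = 2 * t) (ht1 : 1 ≤ t) (hs : 1 ≤ s)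
    (W : Fin (2 * s) → Submodule (ZMod 3) (Fin n → ZMod 3))
    (hdim : ∀ k, Module.finrank (ZMod 3) (W k) = t)
    (hdisj : ∀ i j, i ≠ j → W i ⊓ W j = ⊥)
    (f : (Fin n → ZMod 3) → ZMod 3)
    (hf1 : ∀ (x : Fin n → ZMod 3) (k : Fin (2 * s)), x ≠ 0 → x ∈ W k → (k : ℕ) < s → f x = 1)
    (hf2 : ∀ (x : Fin n → ZMod 3) (k : Fin (2 * s)), x ≠ 0 → x ∈ W k → s ≤ (k : ℕ) → f x = 2)
    (hf0 : ∀ x : Fin n → ZMod 3, (x = 0 ∨ ∀ k, x ∉ W k) → f x = 0)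
    :
    ∀ (α : ZMod 3) (w : Fin n → ZMod 3),
      (α = 0 → w ≠ 0 →
        hammingNorm (fun x : {x : Fin n → ZMod 3 // x ≠ 0} => α * f x.1 + w ⬝ᵥ x.1) = 2 * 3 ^ (n - 1)) ∧
      ((α = 1 ∨ α = 2) → w = 0 →
        hammingNorm (fun x : {x : Fin n → ZMod 3 // x ≠ 0} => α * f x.1 + w ⬝ᵥ x.1) = 2 * s * (3 ^ t - 1)) ∧
      ((α = 1 ∨ α = 2) → (∀ k, ∃ x ∈ W k, w ⬝ᵥ x ≠ 0) →
        hammingNorm (fun x : {x : Fin n → ZMod 3 // x ≠ 0} => α * f x.1 + w ⬝ᵥ x.1) = 2 * 3 ^ (n - 1) - 2 * s) ∧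
      ((α = 1 ∨ α = 2) → w ≠ 0 → (∃ k, ∀ x ∈ W k, w ⬝ᵥ x = 0) →
        hammingNorm (fun x : {x : Fin n → ZMod 3 // x ≠ 0} => α * f x.1 + w ⬝ᵥ x.1) = 2 * 3 ^ (n - 1) + 3 ^ t - 2 * s) := by
  subst ht
  intro α w
  have : NeZero s := ⟨by omega⟩
  have hf := IsPartialSpreadFunction_s5.of_two_values (p := fun k : Fin (2 * s) => (k : ℕ) < s)
    one_ne_zero (by decide) hdisj hf1 (fun x k hx0 hx hk => hf2 x k hx0 hx (not_lt.1 hk)) hf0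
  have hα : α = 1 ∨ α = 2 ↔ α ≠ 0 := by decide +revert
  simpa [hα] using
    stmt5_general hf (Module.finrank_fin_fun _) hdim α (dotProductEquiv (ZMod 3) (Fin (2 * t)) w)
end
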